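/- arXiv:0808.2368 — 2 statements merged into one kernel-verified Lean document; each statement's English description precedes it below -/
import Mathlib

section
/- Let K/L be a quadratic extension of number fields with 𝒪 ⊆ 𝒪_K an order containing 𝒪_L, conductor 𝔣, and 𝔣₀ = 𝔣 ∩ 𝒪_L. Then N_{K/ℚ}(𝔣) = N_{L/ℚ}(N_{K/L}(𝔣)) and 𝔣₀² ⊆ N_{K/L}(𝔣) ⊆ 𝔣₀; consequently N_{L/ℚ}(𝔣₀) ≤ N_{K/ℚ}(𝔣) ≤ N_{L/ℚ}(𝔣₀)². -/
open NumberField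

/-- For number fields, the relative ideal norm is generated by the field norms of the elements. -/
theorem NumberField.relNorm_eq_span_norm {L K : Type*} [Field L] [NumberField L] [Field K]
    [NumberField K] [Algebra L K] (I : Ideal (𝓞 K)) :
    Ideal.relNorm (𝓞 L) I = Ideal.span {a : 𝓞 L | ∃ x ∈ I,
      algebraMap (𝓞 L) L a = Algebra.norm L (x : K)} := by
  rw [Ideal.relNorm_apply]
  congr 1
  ext a
  refine exists_congr fun x => and_congr_right fun _ => ?_
  rw [← Algebra.algebraMap_intNorm (A := 𝓞 L) (K := L) (L := K) (B := 𝓞 K) x,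
    (FaithfulSMul.algebraMap_injective (𝓞 L) L).eq_iff, eq_comm]

/-- The square of the contraction of an ideal in a quadratic extension is contained in the
relative norm of the ideal. -/
theorem NumberField.comap_sq_le_relNorm {L K : Type*} [Field L] [NumberField L] [Field K]
    [NumberField K] [Algebra L K] (hdeg : Module.finrank L K = 2) (I : Ideal (𝓞 K)) :
    I.comap (algebraMap (𝓞 L) (𝓞 K)) ^ 2 ≤ Ideal.relNorm (𝓞 L) I := by
  have h := Ideal.relNorm_algebraMap (𝓞 K) (I.comap (algebraMap (𝓞 L) (𝓞 K)))
  rw [← IsFractionRing.finrank_eq (𝓞 L) L (𝓞 K) K, hdeg] at h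
  rw [← h]
  exact Ideal.relNorm_mono _ Ideal.map_comap_le

/-- Let `K/L` be a quadratic extension of number fields, `𝒪 ⊆ 𝒪_K` an order
containing `𝒪_L` with conductor `𝔣 = {x ∈ 𝒪_K : x𝒪_K ⊆ 𝒪}` and `𝔣₀ = 𝔣 ∩ 𝒪_L`.  Let
`N_{K/L}(𝔣) ⊆ 𝒪_L` be the relative ideal norm (the ideal generated by the norms of elements of
`𝔣`).  Then `N_{K/ℚ}(𝔣) = N_{L/ℚ}(N_{K/L}(𝔣))` and `𝔣₀² ⊆ N_{K/L}(𝔣) ⊆ 𝔣₀`; consequently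
`N_{L/ℚ}(𝔣₀) ≤ N_{K/ℚ}(𝔣) ≤ N_{L/ℚ}(𝔣₀)²`. -/
theorem stmt_8 {L K : Type*} [Field L] [NumberField L] [Field K] [NumberField K]
    [Algebra L K] (hdeg : Module.finrank L K = 2)
    (O : Subring K)
    (hOint : ∀ x ∈ O, IsIntegral ℤ x)
    (hOL : ∀ x : L, IsIntegral ℤ x → algebraMap L K x ∈ O)
    (hOfull : ∃ β ∈ O, β ∉ Set.range (algebraMap L K))
    (f : Ideal (𝓞 K))
    (hf : ∀ x : 𝓞 K, x ∈ f ↔ ∀ y : 𝓞 K, ((x : K) * (y : K)) ∈ O)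
    (f0 : Ideal (𝓞 L))
    (hf0 : f0 = Ideal.comap (algebraMap (𝓞 L) (𝓞 K)) f)
    (Nf : Ideal (𝓞 L))
    (hNf : Nf = Ideal.span {a : 𝓞 L | ∃ x ∈ f,
      algebraMap (𝓞 L) L a = Algebra.norm L (x : K)}) :
    Ideal.absNorm f = Ideal.absNorm Nf ∧
    f0 ^ 2 ≤ Nf ∧ Nf ≤ f0 ∧
    Ideal.absNorm f0 ≤ Ideal.absNorm f ∧ Ideal.absNorm f ≤ (Ideal.absNorm f0) ^ 2 := by
  rw [← NumberField.relNorm_eq_span_norm] at hNf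
  have hsq : f0 ^ 2 ≤ Nf := by
    rw [hNf, hf0]
    exact NumberField.comap_sq_le_relNorm hdeg f
  have hle : Nf ≤ f0 := by
    rw [hNf, hf0]
    exact Ideal.relNorm_le_comap _ f
  have habs : Ideal.absNorm f = Ideal.absNorm Nf := by
    rw [hNf, Ideal.absNorm_relNorm]
  have hlow := Ideal.absNorm_dvd_absNorm_of_le hle
  have hupp := Ideal.absNorm_dvd_absNorm_of_le hsq
  rw [map_pow] at hupp
  refine ⟨habs, hsq, hle, ?_, ?_⟩ <;> rw [habs]
  · rcases Nat.eq_zero_or_pos (Ideal.absNorm Nf) with h0 | h0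
    · rw [h0, zero_dvd_iff] at hupp
      simp [eq_zero_of_pow_eq_zero hupp]
    · exact Nat.le_of_dvd h0 hlow
  · rcases Nat.eq_zero_or_pos (Ideal.absNorm f0) with h0 | h0
    · rw [h0, zero_dvd_iff] at hlow
      simp [hlow]
    · exact Nat.le_of_dvd (pow_pos h0 2) hupp
end

section
/- Let ν be a finite positive Borel measure on C = [0,∞) ∪ [0, i/2] (the tempered and complementary spectral parameter set), let I ⊆ (λ₀, λ₀+ε) be a closed interval (in the eigenvalue parameter λ = t² + 1/4) meeting the support of ν, and let J be an interval strictly containing I inside (λ₀, λ₀+ε). Then there exists an even function h on ℝ whose Fourier transform is smooth and compactly supported, such that h(t) < 0 whenever t² + 1/4 lies outside J, and ∫_C h dν > 0. -/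
open MeasureTheory

/-- The spectral parameter set `C = [0,∞) ∪ [0, i/2] ⊆ ℂ`. -/
def spectralSet : Set ℂ :=
  {z : ℂ | (z.im = 0 ∧ 0 ≤ z.re) ∨ (z.re = 0 ∧ 0 ≤ z.im ∧ z.im ≤ 1/2)}

open Real Set Filter Topology Polynomial FourierTransform Convolution

/-- The Fourier cosine transform, evaluated at complex frequencies. -/
noncomputable def cosTransform (g : ℝ → ℝ) (z : ℂ) : ℂ :=
  ∫ x : ℝ, (g x : ℂ) * Complex.cos (z * x)

/-- Smooth, compactly supported, even functions on the line. -/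
structure IsEvenTest (g : ℝ → ℝ) : Prop where
  contDiff : ContDiff ℝ (⊤ : ℕ∞) g
  hasCompactSupport : HasCompactSupport g
  even : ∀ x, g (-x) = g x

/-- The functions on the complex plane which are cosine transforms of even test functions. -/
def IsCosTransform (h : ℂ → ℂ) : Prop :=
  ∃ g, IsEvenTest g ∧ cosTransform g = h

lemma HasCompactSupport.integrable_ofReal_mul {g : ℝ → ℝ} (hg : Continuous g)
    (hs : HasCompactSupport g) {φ : ℝ → ℂ} (hφ : Continuous φ) :
    Integrable fun x => (g x : ℂ) * φ x := by
  apply Continuous.integrable_of_hasCompactSupport (by fun_prop)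
  exact (hs.comp_left (g := ((↑) : ℝ → ℂ)) rfl).mul_right

namespace IsCosTransform

variable {h h₁ h₂ : ℂ → ℂ}

lemma add (H₁ : IsCosTransform h₁) (H₂ : IsCosTransform h₂) :
    IsCosTransform (fun z => h₁ z + h₂ z) := by
  obtain ⟨g₁, hg₁, rfl⟩ := H₁
  obtain ⟨g₂, hg₂, rfl⟩ := H₂
  refine ⟨g₁ + g₂, ⟨hg₁.contDiff.add hg₂.contDiff,
    hg₁.hasCompactSupport.add hg₂.hasCompactSupport, fun x => ?_⟩, ?_⟩
  · simp [hg₁.even, hg₂.even]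
  · ext z
    simp only [cosTransform, Pi.add_apply, Complex.ofReal_add, add_mul]
    exact integral_add
      (hg₁.hasCompactSupport.integrable_ofReal_mul hg₁.contDiff.continuous (by fun_prop))
      (hg₂.hasCompactSupport.integrable_ofReal_mul hg₂.contDiff.continuous (by fun_prop))

lemma const_mul (H : IsCosTransform h) (c : ℝ) : IsCosTransform (fun z => c * h z) := by
  obtain ⟨g, hg, rfl⟩ := H
  refine ⟨fun x => c * g x, ⟨contDiff_const.mul hg.contDiff,
    hg.hasCompactSupport.mul_left, fun x => by rw [hg.even]⟩, ?_⟩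
  ext z
  simp only [cosTransform, Complex.ofReal_mul, mul_assoc]
  exact integral_const_mul _ _

lemma cos_mul (H : IsCosTransform h) (s : ℝ) :
    IsCosTransform (fun z => Complex.cos (s * z) * h z) := by
  obtain ⟨g, hg, rfl⟩ := H
  have hd : ∀ r : ℝ, ContDiff ℝ (⊤ : ℕ∞) fun x => g (x + r) := fun r =>
    hg.contDiff.comp (contDiff_id.add contDiff_const)
  have hc : ∀ r : ℝ, HasCompactSupport fun x => g (x + r) := fun r =>
    hg.hasCompactSupport.comp_homeomorph (Homeomorph.addRight r)
  have hshift : ∀ (r : ℝ) (z : ℂ), ∫ x : ℝ, (g (x + r) : ℂ) * Complex.cos (z * x) =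
      ∫ x : ℝ, (g x : ℂ) * Complex.cos (z * x - r * z) := fun r z => by
    rw [← integral_add_right_eq_self (fun x : ℝ => (g x : ℂ) * Complex.cos (z * x - r * z)) r]
    congr! 3 with x
    push_cast
    ring_nf
  have hInt : ∀ {φ : ℝ → ℂ}, Continuous φ → Integrable fun x => (g x : ℂ) * φ x := fun hφ =>
    hg.hasCompactSupport.integrable_ofReal_mul hg.contDiff.continuous hφ
  refine ⟨fun x => 2⁻¹ * (g (x + s) + g (x + -s)),
    ⟨contDiff_const.mul ((hd s).add (hd (-s))), ((hc s).add (hc (-s))).mul_left, fun x => ?_⟩, ?_⟩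
  · rw [← hg.even (-x + s), ← hg.even (-x + -s)]
    ring_nf
  · ext z
    calc _ = ∫ x : ℝ, (2⁻¹ : ℂ) * ((g (x + s) : ℂ) * Complex.cos (z * x) +
            (g (x + -s) : ℂ) * Complex.cos (z * x)) := by
          unfold cosTransform
          congr! 2 with x
          push_cast
          ring
      _ = 2⁻¹ * (∫ x : ℝ, (g x : ℂ) * Complex.cos (z * x - s * z) +
            (g x : ℂ) * Complex.cos (z * x - (-s : ℝ) * z)) := by
          rw [integral_const_mul, integral_add
            ((hc s).integrable_ofReal_mul (hd s).continuous (by fun_prop))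
            ((hc (-s)).integrable_ofReal_mul (hd (-s)).continuous (by fun_prop)),
            hshift, hshift, integral_add (hInt (by fun_prop)) (hInt (by fun_prop))]
      _ = _ := by
          unfold cosTransform
          rw [← integral_const_mul, ← integral_const_mul]
          congr! 2 with x
          have : z * x - (-s : ℝ) * z = z * x + s * z := by push_cast; ring
          rw [this, Complex.cos_sub, Complex.cos_add]
          ring

lemma sq_mul (H : IsCosTransform h) : IsCosTransform (fun z => z ^ 2 * h z) := by
  obtain ⟨g, hg, rfl⟩ := H
  have hg1 : ContDiff ℝ (⊤ : ℕ∞) (deriv g) := by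
    simpa using hg.contDiff.iterate_deriv 1
  have hg2 : ContDiff ℝ (⊤ : ℕ∞) (deriv (deriv g)) := by
    simpa using hg.contDiff.iterate_deriv 2
  have hs1 := hg.hasCompactSupport.deriv
  have hs2 := hs1.deriv
  have hodd : ∀ x, deriv g (-x) = -deriv g x := fun x => by
    have : (fun x => g (-x)) = g := funext hg.even
    conv_rhs => rw [← this, deriv_comp_neg, neg_neg]
  have heven : ∀ x, deriv (deriv g) (-x) = deriv (deriv g) x := fun x => by
    have : (fun x => deriv g (-x)) = fun x => -deriv g x := funext hodd
    have h2 := congrArg (fun F => deriv F x) this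
    simp only [deriv_comp_neg, deriv.fun_neg] at h2
    linarith
  refine ⟨fun x => (-1) * deriv (deriv g) x, ⟨contDiff_const.mul hg2, hs2.mul_left,
    fun x => by rw [heven]⟩, ?_⟩
  ext z
  have hlin : ∀ x : ℝ, HasDerivAt (fun x : ℝ => z * (x : ℂ)) z x := fun x => by
    simpa using ((hasDerivAt_id x).ofReal_comp.const_mul z)
  have hcos : ∀ x : ℝ, HasDerivAt (fun x : ℝ => Complex.cos (z * x))
      (-Complex.sin (z * x) * z) x := fun x =>
    (Complex.hasDerivAt_cos _).comp x (hlin x)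
  have hsin : ∀ x : ℝ, HasDerivAt (fun x : ℝ => Complex.sin (z * x))
      (Complex.cos (z * x) * z) x := fun x =>
    (Complex.hasDerivAt_sin _).comp x (hlin x)
  have hInt : ∀ {u : ℝ → ℝ} {φ : ℝ → ℂ}, Continuous u → HasCompactSupport u → Continuous φ →
      Integrable (φ * fun x => ((u x : ℝ) : ℂ)) := fun hu hs hφ =>
    (hs.integrable_ofReal_mul hu hφ).congr (Eventually.of_forall fun x => mul_comm _ _)
  have e1 := integral_mul_deriv_eq_deriv_mul_of_integrable
    (u := fun x : ℝ => Complex.cos (z * x)) (v := fun x : ℝ => ((deriv g x : ℝ) : ℂ))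
    (u' := fun x : ℝ => -Complex.sin (z * x) * z)
    (v' := fun x : ℝ => ((deriv (deriv g) x : ℝ) : ℂ))
    (fun x _ => hcos x)
    (fun x _ => ((hg1.differentiable (by simp)) x).hasDerivAt.ofReal_comp)
    (hInt hg2.continuous hs2 (by fun_prop)) (hInt hg1.continuous hs1 (by fun_prop))
    (hInt hg1.continuous hs1 (by fun_prop))
  have e2 := integral_mul_deriv_eq_deriv_mul_of_integrable
    (u := fun x : ℝ => Complex.sin (z * x)) (v := fun x : ℝ => (g x : ℂ))
    (u' := fun x : ℝ => Complex.cos (z * x) * z) (v' := fun x : ℝ => ((deriv g x : ℝ) : ℂ))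
    (fun x _ => hsin x)
    (fun x _ => ((hg.contDiff.differentiable (by simp)) x).hasDerivAt.ofReal_comp)
    (hInt hg1.continuous hs1 (by fun_prop))
    (hInt hg.contDiff.continuous hg.hasCompactSupport (by fun_prop))
    (hInt hg.contDiff.continuous hg.hasCompactSupport (by fun_prop))
  calc _ = -∫ x : ℝ, Complex.cos (z * x) * ((deriv (deriv g) x : ℝ) : ℂ) := by
        rw [cosTransform, ← integral_neg]
        congr! 2 with x
        push_cast
        ring
    _ = -z * ∫ x : ℝ, Complex.sin (z * x) * ((deriv g x : ℝ) : ℂ) := by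
        rw [e1, neg_neg, ← integral_const_mul]
        congr! 2 with x
        ring
    _ = _ := by
        rw [e2, cosTransform, neg_mul_neg, ← integral_const_mul, ← integral_const_mul]
        congr! 2 with x
        ring

lemma sq_add_mul (H : IsCosTransform h) (c : ℝ) :
    IsCosTransform (fun z => (z ^ 2 + c) * h z) := by
  simpa only [add_mul] using H.sq_mul.add (H.const_mul c)

lemma polynomial_mul (H : IsCosTransform h) (s : ℝ) (p : ℝ[X]) :
    IsCosTransform (fun z => aeval (Complex.cos (s * z)) p * h z) := by
  induction p using Polynomial.induction_on with
  | C a => simpa using H.const_mul a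
  | add p q hp hq => simpa [add_mul] using hp.add hq
  | monomial n a hn =>
    convert! hn.cos_mul s using 2 with z
    simp only [map_mul, map_pow, aeval_C, aeval_X, pow_succ]
    ring

lemma aestronglyMeasurable (H : IsCosTransform h) (ν : Measure ℂ) [SFinite ν] :
    AEStronglyMeasurable h ν := by
  obtain ⟨g, hg, rfl⟩ := H
  have := hg.contDiff.continuous
  have hc : Continuous fun p : ℂ × ℝ => (g p.2 : ℂ) * Complex.cos (p.1 * p.2) := by fun_prop
  exact hc.stronglyMeasurable.integral_prod_right.aestronglyMeasurable

end IsCosTransform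

lemma norm_cos_le_exp_abs_im (w : ℂ) : ‖Complex.cos w‖ ≤ rexp |w.im| := by
  rw [Complex.cos, norm_div, div_le_iff₀ (by simp)]
  refine (norm_add_le _ _).trans ?_
  rw [Complex.norm_exp, Complex.norm_exp]
  have h1 : (w * Complex.I).re ≤ |w.im| := by simpa using neg_le_abs w.im
  have h2 : (-w * Complex.I).re ≤ |w.im| := by simpa using le_abs_self w.im
  have := Real.exp_le_exp.2 h1
  have := Real.exp_le_exp.2 h2
  simp only [Complex.norm_ofNat]
  linarith

lemma IsCosTransform.integrable {h : ℂ → ℂ} (H : IsCosTransform h) (ν : Measure ℂ)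
    [IsFiniteMeasure ν] {c : ℝ} (hν : ∀ᵐ z ∂ν, |z.im| ≤ c) : Integrable h ν := by
  have hm := H.aestronglyMeasurable ν
  obtain ⟨g, hg, rfl⟩ := H
  refine Integrable.of_bound hm (∫ x, ‖(g x : ℂ) * (rexp (c * |x|) : ℂ)‖) ?_
  filter_upwards [hν] with z hz
  refine norm_integral_le_of_norm_le (hg.hasCompactSupport.integrable_ofReal_mul
    hg.contDiff.continuous (φ := fun x : ℝ => (rexp (c * |x|) : ℂ)) (by fun_prop)).norm ?_
  refine Eventually.of_forall fun x => ?_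
  rw [norm_mul, norm_mul]
  gcongr
  rw [Complex.norm_real, Real.norm_of_nonneg (exp_pos _).le]
  refine (norm_cos_le_exp_abs_im _).trans (Real.exp_le_exp.2 ?_)
  simpa [abs_mul] using mul_le_mul_of_nonneg_right hz (abs_nonneg x)

lemma im_fourier_eq_zero_of_even {f : ℝ → ℝ} (hf : ∀ x, f (-x) = f x) (ξ : ℝ) :
    (𝓕 (fun x => (f x : ℂ)) ξ).im = 0 := by
  rw [← Complex.conj_eq_iff_im, Real.fourier_real_eq_integral_exp_smul, ← integral_conj,
    ← integral_neg_eq_self]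
  congr! 2 with x
  simp [← Complex.exp_conj, hf, Complex.conj_ofNat]

/-- If the Fourier transform of `k` is nonnegative and nonzero then that of the product of `k` with
a Gaussian is strictly positive. -/
lemma exists_pos_fourier_mul_gaussian {k : ℝ → ℂ} (hk : Integrable k) {r : ℝ → ℝ}
    (hr : Continuous r) (hr0 : ∀ x, 0 ≤ r x) {x₀ : ℝ} (hx₀ : r x₀ ≠ 0)
    (hkr : ∀ x, 𝓕 k x = r x) (c : ℝ) :
    ∃ R : ℝ, 0 < R ∧
      ∫ x : ℝ, k x * Complex.exp (-π * x ^ 2 - 2 * π * c * x * Complex.I) = R := by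
  have hG : Integrable fun x : ℝ => Complex.exp (-π * 1 * x ^ 2 + 2 * π * c * x) := by
    have := GaussianFourier.integrable_cexp_neg_mul_sq_norm_add (V := ℝ) (b := π)
      (by simpa using Real.pi_pos) (2 * π * c) 1
    refine this.congr (Eventually.of_forall fun x => ?_)
    simp [← Complex.ofReal_pow]
  have hflip := VectorFourier.integral_fourierIntegral_smul_eq_flip (μ := volume) (ν := volume)
    (L := innerₗ ℝ) Real.continuous_fourierChar (by exact continuous_inner) hk hG
  have hgauss := fourier_gaussian_pi' (b := 1) (by simp) (c : ℂ)
  have hflip' : ∫ x : ℝ, (r x : ℂ) * Complex.exp (-π * 1 * x ^ 2 + 2 * π * c * x) =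
      ∫ x : ℝ, k x * (1 / 1 ^ (1 / 2 : ℂ) * Complex.exp (-π / 1 * (x + Complex.I * c) ^ 2)) := by
    rw [flip_innerₗ] at hflip
    simp only [← hkr, ← congrFun hgauss]
    exact hflip
  have hw : ∀ x : ℝ, Complex.exp (-π * 1 * x ^ 2 + 2 * π * c * x) =
      (rexp (-π * x ^ 2 + 2 * π * c * x) : ℂ) := fun x => by push_cast; ring_nf
  have hrb : ∀ x, ‖r x‖ ≤ ∫ y, ‖k y‖ := fun x => by
    rw [← Complex.norm_real, ← hkr]
    exact VectorFourier.norm_fourierIntegral_le_integral_norm _ _ _ _ _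
  have hrG : Integrable fun x => r x * rexp (-π * x ^ 2 + 2 * π * c * x) := by
    refine Integrable.bdd_mul ?_ hr.aestronglyMeasurable (Eventually.of_forall hrb)
    simp only [hw] at hG
    exact hG.re
  have hpos : 0 < ∫ x, r x * rexp (-π * x ^ 2 + 2 * π * c * x) :=
    integral_pos_of_integrable_nonneg_nonzero (x := x₀) (by fun_prop) hrG
      (fun x => mul_nonneg (hr0 x) (Real.exp_pos _).le)
      (mul_ne_zero hx₀ (Real.exp_pos _).ne')
  refine ⟨rexp (-π * c ^ 2) * ∫ x, r x * rexp (-π * x ^ 2 + 2 * π * c * x),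
    mul_pos (Real.exp_pos _) hpos, ?_⟩
  rw [Complex.ofReal_mul, ← integral_complex_ofReal]
  simp only [Complex.ofReal_mul, ← hw]
  rw [hflip', ← integral_const_mul]
  refine integral_congr_ae (Eventually.of_forall fun x => ?_)
  have : (-π * x ^ 2 - 2 * π * c * x * Complex.I : ℂ) =
      ((-π * c ^ 2 : ℝ) : ℂ) + -π / 1 * (x + Complex.I * c) ^ 2 := by
    linear_combination (norm := (push_cast; ring_nf)) (π * c ^ 2 : ℂ) * Complex.I_sq
  simp only [this, Complex.exp_add, Complex.ofReal_exp]
  simp only [Complex.one_cpow]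
  ring

/-- There is an even test function whose cosine transform is positive on the spectral set. -/
lemma exists_isCosTransform_pos :
    ∃ h : ℂ → ℂ, IsCosTransform h ∧ ∀ z ∈ spectralSet, 0 < (h z).re ∧ (h z).im = 0 := by
  let f : ContDiffBump (0 : ℝ) := ⟨1, 2, one_pos, one_lt_two⟩
  let k : ℝ → ℝ := (f : ℝ → ℝ) ⋆[ContinuousLinearMap.mul ℝ ℝ] f
  have hfint : Integrable (f : ℝ → ℝ) := f.integrable
  have hkd : ContDiff ℝ (⊤ : ℕ∞) k :=
    f.hasCompactSupport.contDiff_convolution_left _ f.contDiff hfint.locallyIntegrable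
  have hkc : HasCompactSupport k := f.hasCompactSupport.convolution _ f.hasCompactSupport
  have hke : ∀ x, k (-x) = k x := fun x => convolution_neg_of_neg_eq _
    (Eventually.of_forall f.neg) (Eventually.of_forall f.neg)
  have hk0 : ∀ x, 0 ≤ k x := fun x =>
    integral_nonneg fun y => mul_nonneg f.nonneg f.nonneg
  let r : ℝ → ℝ := fun x => (𝓕 (fun x => (f x : ℂ)) x).re
  have hr : Continuous r := Complex.continuous_re.comp
    (VectorFourier.fourierIntegral_continuous Real.continuous_fourierChar (by exact continuous_inner)
      hfint.ofReal)
  have hfr : ∀ x, 𝓕 (fun x => (f x : ℂ)) x = r x := fun x =>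
    Complex.ext rfl (im_fourier_eq_zero_of_even f.neg x)
  have hkr : ∀ x, 𝓕 (fun x => (k x : ℂ)) x = ((r x ^ 2 : ℝ) : ℂ) := fun x => by
    have : (fun x => (k x : ℂ)) =
        (fun x => (f x : ℂ)) ⋆[ContinuousLinearMap.mul ℂ ℂ] (fun x => (f x : ℂ)) := by
      ext x
      simp only [k, convolution_def, ContinuousLinearMap.mul_apply', ← Complex.ofReal_mul]
      exact integral_complex_ofReal.symm
    have hF : Integrable (fun x => (f x : ℂ)) := hfint.ofReal
    rw [this, Real.fourier_bilin_convolution_eq _ hF hF, hfr, ContinuousLinearMap.mul_apply']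
    push_cast
    ring
  have hr0 : r 0 ^ 2 ≠ 0 := by
    have : r 0 = ∫ x, f x := by
      simp only [r, Real.fourier_real_eq_integral_exp_smul]
      simp [integral_complex_ofReal]
    rw [this]
    exact (pow_pos f.integral_pos 2).ne'
  have hkne : k ≠ 0 := by
    intro h0
    apply hr0
    have := hkr 0
    simp only [h0, Pi.zero_apply, Complex.ofReal_zero, Real.fourier_real_eq_integral_exp_smul,
      smul_zero, integral_zero] at this
    exact_mod_cast this.symm
  have hgd : ContDiff ℝ (⊤ : ℕ∞) fun x => k x * rexp (-π * x ^ 2) := by fun_prop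
  have hgc : HasCompactSupport fun x => k x * rexp (-π * x ^ 2) := hkc.mul_right
  refine ⟨_, ⟨fun x => k x * rexp (-π * x ^ 2), ⟨hgd, hgc, fun x => ?_⟩, rfl⟩, fun z hz => ?_⟩
  · simp [hke]
  rcases hz with ⟨hz, -⟩ | ⟨hz, -, -⟩
  · obtain ⟨t, rfl⟩ : ∃ t : ℝ, z = (t : ℂ) := ⟨z.re, Complex.ext rfl (by simp [hz])⟩
    have key := exists_pos_fourier_mul_gaussian (k := fun x => (k x : ℂ)) (r := fun x => r x ^ 2)
      (hkd.continuous.integrable_of_hasCompactSupport hkc).ofReal (hr.pow 2)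
      (fun x => sq_nonneg _) hr0 hkr
    obtain ⟨R₁, h₁, e₁⟩ := key (t / (2 * π))
    obtain ⟨R₂, h₂, e₂⟩ := key (-(t / (2 * π)))
    have : cosTransform (fun x => k x * rexp (-π * x ^ 2)) t = ((2⁻¹ * (R₁ + R₂) : ℝ) : ℂ) := by
      push_cast
      have hInt : ∀ c : ℝ, Integrable fun x : ℝ =>
          (k x : ℂ) * Complex.exp (-π * x ^ 2 - 2 * π * c * x * Complex.I) := fun c =>
        hkc.integrable_ofReal_mul hkd.continuous (by fun_prop)
      rw [← e₁, ← e₂, ← integral_add (hInt _) (hInt _), ← integral_const_mul, cosTransform]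
      have hπ : (π : ℂ) ≠ 0 := by exact_mod_cast Real.pi_ne_zero
      have a₁ : ∀ x : ℝ, (-π * x ^ 2 - 2 * π * (t / (2 * π) : ℝ) * x * Complex.I : ℂ) =
          -π * x ^ 2 + -(t * x) * Complex.I := fun x => by
        push_cast
        field_simp
        ring
      have a₂ : ∀ x : ℝ, (-π * x ^ 2 - 2 * π * (-(t / (2 * π)) : ℝ) * x * Complex.I : ℂ) =
          -π * x ^ 2 + (t * x) * Complex.I := fun x => by
        push_cast
        field_simp
        ring
      simp only [a₁, a₂, Complex.exp_add, Complex.cos]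
      refine integral_congr_ae (Eventually.of_forall fun x => ?_)
      beta_reduce
      push_cast
      ring
    rw [this, Complex.ofReal_re]
    exact ⟨by positivity, Complex.ofReal_im _⟩
  · obtain ⟨s, rfl⟩ : ∃ s : ℝ, z = (s : ℂ) * Complex.I :=
      ⟨z.im, Complex.ext (by simp [hz]) (by simp)⟩
    have : cosTransform (fun x => k x * rexp (-π * x ^ 2)) (s * Complex.I) =
        ((∫ x, k x * rexp (-π * x ^ 2) * Real.cosh (s * x) : ℝ) : ℂ) := by
      rw [← integral_complex_ofReal, cosTransform]
      congr! 2 with x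
      have : (s * Complex.I * x : ℂ) = (s * x : ℂ) * Complex.I := by ring
      rw [this, Complex.cos_mul_I]
      push_cast
      rfl
    rw [this, Complex.ofReal_re]
    refine ⟨?_, Complex.ofReal_im _⟩
    have hpos : ∀ x : ℝ, 0 < rexp (-π * x ^ 2) * Real.cosh (s * x) := fun x =>
      mul_pos (Real.exp_pos _) (Real.cosh_pos _)
    obtain ⟨x, hx⟩ := Function.ne_iff.1 hkne
    refine Continuous.integral_pos_of_hasCompactSupport_nonneg_nonzero (x := x) ?_
      hgc.mul_right (fun x => ?_) ?_
    · have := hkd.continuous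
      fun_prop
    · rw [Pi.zero_apply, mul_assoc]
      exact mul_nonneg (hk0 x) (hpos x).le
    · rw [mul_assoc]
      exact mul_ne_zero hx (hpos x).ne'

lemma isClosed_spectralSet : IsClosed spectralSet := by
  have hre : Continuous Complex.re := Complex.continuous_re
  have him : Continuous Complex.im := Complex.continuous_im
  exact ((isClosed_eq him continuous_const).inter (isClosed_le continuous_const hre)).union
    ((isClosed_eq hre continuous_const).inter
      ((isClosed_le continuous_const him).inter (isClosed_le him continuous_const)))

lemma exists_eq_of_mem_spectralSet {z : ℂ} (hz : z ∈ spectralSet) :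
    (∃ t : ℝ, 0 ≤ t ∧ z = t) ∨ ∃ t : ℝ, 0 ≤ t ∧ t ≤ 1 / 2 ∧ z = t * Complex.I := by
  rcases hz with ⟨h, h'⟩ | ⟨h, h', h''⟩
  · exact .inl ⟨z.re, h', Complex.ext rfl (by simp [h])⟩
  · exact .inr ⟨z.im, h', h'', Complex.ext (by simp [h]) (by simp)⟩

lemma cos_ofReal_mul_ofReal (s t : ℝ) : Complex.cos (s * t) = (Real.cos (s * t) : ℂ) := by
  push_cast
  rfl

lemma cos_ofReal_mul_mul_I (s t : ℝ) :
    Complex.cos (s * (t * Complex.I)) = (Real.cosh (s * t) : ℂ) := by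
  rw [← mul_assoc, Complex.cos_mul_I]
  push_cast
  rfl

lemma im_cos_mul_of_mem_spectralSet {z : ℂ} (hz : z ∈ spectralSet) (s : ℝ) :
    (Complex.cos (s * z)).im = 0 := by
  obtain ⟨t, -, rfl⟩ | ⟨t, -, -, rfl⟩ := exists_eq_of_mem_spectralSet hz
  · rw [cos_ofReal_mul_ofReal, Complex.ofReal_im]
  · rw [cos_ofReal_mul_mul_I, Complex.ofReal_im]

lemma re_cos_mul_mem_Icc {z : ℂ} (hz : z ∈ spectralSet) {s : ℝ} (hs : 0 ≤ s) :
    (Complex.cos (s * z)).re ∈ Icc (-1) (Real.cosh s) := by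
  obtain ⟨t, -, rfl⟩ | ⟨t, h0, h1, rfl⟩ := exists_eq_of_mem_spectralSet hz
  · rw [cos_ofReal_mul_ofReal, Complex.ofReal_re]
    exact ⟨Real.neg_one_le_cos _, (Real.cos_le_one _).trans (Real.one_le_cosh _)⟩
  · rw [cos_ofReal_mul_mul_I, Complex.ofReal_re]
    refine ⟨by linarith [Real.one_le_cosh (s * t)], Real.cosh_le_cosh.2 ?_⟩
    rw [abs_of_nonneg (by positivity), abs_of_nonneg hs]
    nlinarith

lemma injOn_re_cos_mul {s : ℝ} (hs : 0 < s) :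
    InjOn (fun z : ℂ => (Complex.cos (s * z)).re) (spectralSet ∩ {z | s * z.re ≤ π}) := by
  have mixed : ∀ t u : ℝ, 0 ≤ t → s * t ≤ π → 0 ≤ u → Real.cos (s * t) = Real.cosh (s * u) →
      t = 0 ∧ u = 0 := fun t u ht htπ hu h => by
    have h1 : Real.cos (s * t) = 1 :=
      le_antisymm (Real.cos_le_one _) (h ▸ Real.one_le_cosh _)
    refine ⟨?_, ?_⟩
    · have := Real.injOn_cos ⟨by positivity, htπ⟩ ⟨le_rfl, Real.pi_pos.le⟩
        (h1.trans Real.cos_zero.symm)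
      exact (mul_eq_zero.1 this).resolve_left hs.ne'
    · by_contra hne
      have := Real.one_lt_cosh.2 (mul_ne_zero hs.ne' hne)
      linarith
  rintro z ⟨hz, hzπ⟩ w ⟨hw, hwπ⟩ h
  obtain ⟨t, ht, rfl⟩ | ⟨t, ht, -, rfl⟩ := exists_eq_of_mem_spectralSet hz <;>
  obtain ⟨u, hu, rfl⟩ | ⟨u, hu, -, rfl⟩ := exists_eq_of_mem_spectralSet hw <;>
  simp only [cos_ofReal_mul_ofReal, cos_ofReal_mul_mul_I, Complex.ofReal_re, mem_ofPred_eq]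
    at h hzπ hwπ
  · have := Real.injOn_cos ⟨by positivity, hzπ⟩ ⟨by positivity, hwπ⟩ h
    rw [mul_left_cancel₀ hs.ne' this]
  · obtain ⟨rfl, rfl⟩ := mixed t u ht hzπ hu h
    simp
  · obtain ⟨rfl, rfl⟩ := mixed u t hu hwπ ht h.symm
    simp
  · have := Real.cosh_strictMonoOn.injOn (mem_Ici.2 (by positivity)) (mem_Ici.2 (by positivity)) h
    rw [mul_left_cancel₀ hs.ne' this]

/-- A polynomial in `cos (s z)` with small frequency `s` can separate disjoint compact subsets of
the spectral set while staying bounded on the whole of it. -/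
lemma exists_polynomial_cos_separating {K₀ K₁ : Set ℂ} (h₀ : IsCompact K₀) (h₁ : IsCompact K₁)
    (hK₀ : K₀ ⊆ spectralSet) (hK₁ : K₁ ⊆ spectralSet) (hd : Disjoint K₀ K₁)
    {δ : ℝ} (hδ : 0 < δ) :
    ∃ (s : ℝ) (p : ℝ[X]),
      (∀ z ∈ spectralSet, |p.eval (Complex.cos (s * z)).re| ≤ 1 + δ) ∧
      (∀ z ∈ K₀, |p.eval (Complex.cos (s * z)).re| ≤ δ) ∧
      ∀ z ∈ K₁, 1 - δ ≤ p.eval (Complex.cos (s * z)).re := by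
  obtain ⟨L, hL0, hL⟩ := (h₀.union h₁).isBounded.exists_pos_norm_le
  have hs : 0 < π / L := div_pos Real.pi_pos hL0
  have hsub : ∀ z ∈ K₀ ∪ K₁, z ∈ spectralSet ∩ {z | π / L * z.re ≤ π} := fun z hz => by
    refine ⟨hz.elim (@hK₀ z) (@hK₁ z), ?_⟩
    have := (Complex.re_le_norm z).trans (hL z hz)
    calc π / L * z.re ≤ π / L * L := by gcongr
      _ = π := div_mul_cancel₀ _ hL0.ne'
  set u : ℂ → ℝ := fun z => (Complex.cos ((π / L : ℝ) * z)).re with hu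
  have huc : Continuous u := by fun_prop
  have hdisj : Disjoint (u '' K₀) (u '' K₁) :=
    disjoint_image_image fun x hx y hy h => disjoint_left.1 hd hx
      (injOn_re_cos_mul hs (hsub x (.inl hx)) (hsub y (.inr hy)) h ▸ hy)
  obtain ⟨χ, hχ0, hχ1, hχ⟩ := exists_continuous_zero_one_of_isClosed
    (h₀.image huc).isClosed (h₁.image huc).isClosed hdisj
  obtain ⟨p, hp⟩ := exists_polynomial_near_of_continuousOn (-1) (Real.cosh (π / L)) χ
    χ.continuous.continuousOn δ hδ
  have hp' : ∀ z ∈ spectralSet, |p.eval (u z) - χ (u z)| < δ := fun z hz =>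
    hp _ (re_cos_mul_mem_Icc hz hs.le)
  refine ⟨π / L, p, fun z hz => ?_, fun z hz => ?_, fun z hz => ?_⟩
  · have := abs_lt.1 (hp' z hz)
    have := hχ (u z)
    exact abs_le.2 ⟨by linarith [this.1], by linarith [this.2]⟩
  · have := hp' z (hK₀ hz)
    rw [hχ0 (mem_image_of_mem u hz)] at this
    rw [Pi.zero_apply, sub_zero] at this
    exact this.le
  · have := abs_lt.1 (hp' z (hK₁ hz))
    rw [hχ1 (mem_image_of_mem u hz), Pi.one_apply] at this
    exact (by linarith [this.1] : 1 - δ ≤ p.eval (u z))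

lemma isCompact_spectralSet_inter_re_le (L : ℝ) : IsCompact (spectralSet ∩ {z | z.re ≤ L}) := by
  refine Metric.isCompact_of_isClosed_isBounded
    (isClosed_spectralSet.inter (isClosed_le Complex.continuous_re continuous_const)) ?_
  refine isBounded_iff_forall_norm_le.2 ⟨max L (1 / 2), ?_⟩
  rintro z ⟨hz, hzL⟩
  obtain ⟨t, ht, rfl⟩ | ⟨t, ht, ht', rfl⟩ := exists_eq_of_mem_spectralSet hz
  · exact le_max_of_le_left (by simpa [abs_of_nonneg ht] using hzL)
  · exact le_max_of_le_right (by simpa [abs_of_nonneg ht] using ht')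

lemma exists_setIntegral_re_gt_lt {ν : Measure ℂ} {f : ℂ → ℝ} (hf : Integrable f ν) {τ : ℝ}
    (hτ : 0 < τ) : ∃ L : ℝ, ∫ z in {z : ℂ | L < z.re}, f z ∂ν < τ := by
  have hmeas : ∀ L : ℝ, MeasurableSet {z : ℂ | L < z.re} := fun L =>
    measurableSet_lt measurable_const Complex.measurable_re
  have hlim := tendsto_setIntegral_of_antitone (μ := ν) (f := f) hmeas
    (fun L M h z (hz : M < z.re) => h.trans_lt hz) ⟨0, hf.integrableOn⟩
  have hempty : ⋂ L : ℝ, {z : ℂ | L < z.re} = ∅ :=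
    eq_empty_iff_forall_notMem.2 fun z hz => lt_irrefl z.re (mem_iInter.1 hz z.re)
  rw [hempty, Measure.restrict_empty, integral_zero_measure] at hlim
  exact (hlim.eventually_lt_const hτ).exists

/-- Squares of trigonometric polynomials can be used to concentrate a weight near the set where it
is known to be positive. -/
lemma exists_polynomial_cos_integral_pos {ν : Measure ℂ} (hν : ∀ᵐ z ∂ν, z ∈ spectralSet)
    {Q : ℂ → ℝ} (hQ : Integrable Q ν) {E U : Set ℂ} (hE : IsCompact E) (hU : IsOpen U)
    (hEU : E ⊆ U) (hES : E ⊆ spectralSet) (hνE : ν E ≠ 0) (hQE : ∀ z ∈ E, 0 < Q z)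
    (hQU : ∀ z ∈ spectralSet ∩ U, 0 ≤ Q z) :
    ∃ (s : ℝ) (p : ℝ[X]) (η : ℝ), 0 < η ∧
      0 < ∫ z, ((p.eval (Complex.cos (s * z)).re) ^ 2 + η) * Q z ∂ν := by
  have hc : 0 < ∫ z in E, Q z ∂ν := by
    rw [setIntegral_pos_iff_support_of_nonneg_ae
      (ae_restrict_of_forall_mem hE.measurableSet fun z hz => (hQE z hz).le) hQ.integrableOn,
      inter_eq_right.2 fun z hz => Function.mem_support.2 (hQE z hz).ne']
    exact hνE.bot_lt
  set c := ∫ z in E, Q z ∂ν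
  set D := ∫ z, |Q z| ∂ν
  have hD : 0 ≤ D := integral_nonneg fun z => abs_nonneg _
  obtain ⟨L, hL⟩ := exists_setIntegral_re_gt_lt hQ.abs (τ := c / 32) (by positivity)
  set T := {z : ℂ | L < z.re}
  have hT : MeasurableSet T := measurableSet_lt measurable_const Complex.measurable_re
  obtain ⟨δ, hδ0, hδ1, hδD⟩ : ∃ δ : ℝ, 0 < δ ∧ δ ≤ 1 / 2 ∧ δ * D ≤ c / 32 := by
    refine ⟨min (1 / 2) (c / (32 * (D + 1))), by positivity, min_le_left _ _, ?_⟩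
    calc _ ≤ c / (32 * (D + 1)) * (D + 1) := by
          gcongr
          · exact min_le_right _ _
          · linarith
      _ = c / 32 := by field_simp
  obtain ⟨s, p, hp, hp0, hp1⟩ := exists_polynomial_cos_separating
    ((isCompact_spectralSet_inter_re_le L).diff hU) hE
    (fun z hz => hz.1.1) hES (disjoint_left.2 fun z hz hz' => hz.2 (hEU hz')) hδ0
  refine ⟨s, p, δ, hδ0, ?_⟩
  have hInt : Integrable (fun z => ((p.eval (Complex.cos (s * z)).re) ^ 2 + δ) * Q z) ν := by
    refine hQ.bdd_mul (c := (1 + δ) ^ 2 + δ) ?_ ?_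
    · have : Continuous fun z : ℂ => (p.eval (Complex.cos (s * z)).re) ^ 2 + δ := by fun_prop
      exact this.aestronglyMeasurable
    · filter_upwards [hν] with z hz
      rw [Real.norm_of_nonneg (by positivity), ← sq_abs]
      gcongr
      exact hp z hz
  have i₁ : Integrable (fun z => 1 / 4 * E.indicator Q z) ν :=
    (hQ.indicator hE.measurableSet).const_mul _
  have i₂ : Integrable (fun z => 4 * T.indicator (fun z => |Q z|) z) ν :=
    (hQ.abs.indicator hT).const_mul _
  have i₃ : Integrable (fun z => 2 * δ * |Q z|) ν := hQ.abs.const_mul _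
  have hle : ∫ z, (1 / 4 * E.indicator Q z - 4 * T.indicator (fun z => |Q z|) z - 2 * δ * |Q z|) ∂ν
      ≤ ∫ z, ((p.eval (Complex.cos (s * z)).re) ^ 2 + δ) * Q z ∂ν := by
    refine integral_mono_ae ((i₁.sub i₂).sub i₃) hInt ?_
    filter_upwards [hν] with z hz
    have hT0 : 0 ≤ T.indicator (fun z => |Q z|) z := indicator_nonneg (fun _ _ => abs_nonneg _) _
    have hQabs := abs_nonneg (Q z)
    have hδQ : 0 ≤ δ * |Q z| := by positivity
    have hsq := sq_nonneg (p.eval (Complex.cos (s * z)).re)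
    by_cases hzE : z ∈ E
    · have h1 := hp1 z hzE
      have h2 := hQE z hzE
      have h3 : 1 / 4 ≤ (p.eval (Complex.cos (s * z)).re) ^ 2 := by nlinarith
      rw [indicator_of_mem hzE]
      nlinarith
    rw [indicator_of_notMem hzE]
    by_cases hzU : z ∈ U
    · have := mul_nonneg (add_nonneg hsq hδ0.le) (hQU z ⟨hz, hzU⟩)
      linarith
    have hlow : -(((p.eval (Complex.cos (s * z)).re) ^ 2 + δ) * |Q z|) ≤
        ((p.eval (Complex.cos (s * z)).re) ^ 2 + δ) * Q z := by
      rw [← mul_neg]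
      exact mul_le_mul_of_nonneg_left (neg_abs_le _) (by positivity)
    by_cases hzT : z ∈ T
    · have h1 := sq_le_sq' (abs_le.1 (hp z hz)).1 (abs_le.1 (hp z hz)).2
      have h2 : (p.eval (Complex.cos (s * z)).re) ^ 2 ≤ 4 := by nlinarith
      have h3 := mul_le_mul_of_nonneg_right h2 hQabs
      rw [indicator_of_mem hzT]
      nlinarith
    · have hz0 := hp0 z ⟨⟨hz, (not_lt.1 hzT : z.re ≤ L)⟩, hzU⟩
      have h1 := sq_le_sq' (abs_le.1 hz0).1 (abs_le.1 hz0).2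
      have h2 : (p.eval (Complex.cos (s * z)).re) ^ 2 ≤ δ := by nlinarith
      have h3 := mul_le_mul_of_nonneg_right h2 hQabs
      linarith
  refine lt_of_lt_of_le ?_ hle
  rw [integral_sub (by exact i₁.sub i₂) i₃, integral_sub i₁ i₂, integral_const_mul, integral_const_mul,
    integral_const_mul, integral_indicator hE.measurableSet, integral_indicator hT]
  linarith

lemma im_sq_of_mem_spectralSet {z : ℂ} (hz : z ∈ spectralSet) : (z ^ 2).im = 0 := by
  obtain ⟨t, -, rfl⟩ | ⟨t, -, -, rfl⟩ := exists_eq_of_mem_spectralSet hz <;> simp [pow_two]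

lemma isCompact_eigenvalue_mem_Icc (a b : ℝ) :
    IsCompact {z : ℂ | z ∈ spectralSet ∧ (z ^ 2 + 1/4).re ∈ Icc a b} := by
  refine (isCompact_spectralSet_inter_re_le (b + 1)).of_isClosed_subset ?_ ?_
  · exact isClosed_spectralSet.inter (isClosed_Icc.preimage (by fun_prop))
  · rintro z ⟨hz, -, hzb⟩
    refine ⟨hz, ?_⟩
    have hb : z.re ^ 2 - z.im ^ 2 + 1 / 4 ≤ b := by
      simpa [pow_two] using hzb
    rcases hz with ⟨h, -⟩ | ⟨h, h0, h1⟩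
    · rw [h] at hb
      exact (by nlinarith [sq_nonneg (z.re - 1 / 2)] : z.re ≤ b + 1)
    · rw [h] at hb
      exact (by nlinarith : z.re ≤ b + 1)

/-- Let `ν` be a finite positive Borel measure on
`C = [0,∞) ∪ [0, i/2]`, let `I = [a,b] ⊆ (λ₀, λ₀+ε)` be a closed interval in the eigenvalue
parameter `λ = t² + 1/4` meeting the support of `ν`, and let `J = (a', b')` be an interval
strictly containing `I` inside `(λ₀, λ₀+ε)`.  Then there is an even function `h` on ℝ (here
realized as the Fourier cosine transform `h z = ∫ g x cos(zx) dx` of a smooth, even, compactly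
supported `g`, so that `ĥ = g` is smooth and compactly supported, and `h` makes sense on all of
`C`), such that `h(t) < 0` whenever `t² + 1/4` lies outside `J` (for `t ∈ C`), and
`∫_C h dν > 0`. -/
theorem stmt_10 (ν : Measure ℂ) [IsFiniteMeasure ν] (hνC : ν spectralSetᶜ = 0)
    (lam0 ε a b a' b' : ℝ) (hε : 0 < ε)
    (hIa : lam0 < a) (hIab : a ≤ b) (hIb : b < lam0 + ε)
    (hJa : lam0 < a') (hJa' : a' < a) (hJb : b < b') (hJb' : b' < lam0 + ε)
    (hsupp : 0 < ν {z : ℂ | z ∈ spectralSet ∧ (z ^ 2 + 1/4).re ∈ Set.Icc a b}) :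
    ∃ g : ℝ → ℝ, ContDiff ℝ (⊤ : ℕ∞) g ∧ HasCompactSupport g ∧ (∀ x : ℝ, g (-x) = g x) ∧
      (∀ z ∈ spectralSet, (z ^ 2 + 1/4).re ∉ Set.Ioo a' b' →
        ((∫ x : ℝ, (g x : ℂ) * Complex.cos (z * x)).re < 0 ∧
         (∫ x : ℝ, (g x : ℂ) * Complex.cos (z * x)).im = 0)) ∧
      0 < (∫ z : ℂ, (∫ x : ℝ, (g x : ℂ) * Complex.cos (z * x)) ∂ν).re ∧
      (∫ z : ℂ, (∫ x : ℝ, (g x : ℂ) * Complex.cos (z * x)) ∂ν).im = 0 := by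
  have hν : ∀ᵐ z ∂ν, z ∈ spectralSet := hνC
  obtain ⟨a₁, ha₁, ha₁'⟩ := exists_between hJa'
  obtain ⟨b₁, hb₁, hb₁'⟩ := exists_between hJb
  obtain ⟨φ, hφ, hφpos⟩ := exists_isCosTransform_pos
  have hw : IsCosTransform fun z => (z ^ 2 + (1 / 4 - a₁ : ℝ)) *
      (((-1 : ℝ) : ℂ) * ((z ^ 2 + (1 / 4 - b₁ : ℝ)) * φ z)) :=
    ((hφ.sq_add_mul _).const_mul _).sq_add_mul _
  set w : ℂ → ℂ := fun z => (z ^ 2 + (1 / 4 - a₁ : ℝ)) *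
      (((-1 : ℝ) : ℂ) * ((z ^ 2 + (1 / 4 - b₁ : ℝ)) * φ z))
  have hw_eq : ∀ z ∈ spectralSet,
      w z = (((z ^ 2 + 1/4).re - a₁) * (b₁ - (z ^ 2 + 1/4).re) * (φ z).re : ℝ) := fun z hz => by
    have h1 : (φ z) = ((φ z).re : ℂ) := Complex.ext rfl (hφpos z hz).2
    have h2 : z ^ 2 = ((z ^ 2).re : ℂ) := Complex.ext rfl (im_sq_of_mem_spectralSet hz)
    have h3 : (z ^ 2 + 1/4).re = (z ^ 2).re + 1 / 4 := by simp
    simp only [w]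
    rw [h1, h2, ← h2, h3]
    generalize (z ^ 2).re = y at *
    rw [h2]
    push_cast
    simp only [Complex.ofReal_re]
    ring
  have hw_re : ∀ z ∈ spectralSet,
      (w z).re = ((z ^ 2 + 1/4).re - a₁) * (b₁ - (z ^ 2 + 1/4).re) * (φ z).re := fun z hz => by
    rw [hw_eq z hz, Complex.ofReal_re]
  have hwint : Integrable w ν := by
    refine hw.integrable ν (c := 1 / 2) ?_
    filter_upwards [hν] with z hz
    obtain ⟨t, -, rfl⟩ | ⟨t, ht, ht', rfl⟩ := exists_eq_of_mem_spectralSet hz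
    · simp
    · simpa [abs_of_nonneg ht] using ht'
  have hcont : Continuous fun z : ℂ => (z ^ 2 + 1/4).re := by fun_prop
  have hU : IsOpen {z : ℂ | (z ^ 2 + 1/4).re ∈ Ioo a₁ b₁} :=
    isOpen_Ioo.preimage hcont
  obtain ⟨s, p, η, hη, hpos⟩ := exists_polynomial_cos_integral_pos hν hwint.re
    (isCompact_eigenvalue_mem_Icc a b)
    hU
    (fun z hz => ⟨ha₁'.trans_le hz.2.1, hz.2.2.trans_lt hb₁⟩) (fun z hz => hz.1) hsupp.ne'
    (fun z hz => by
      rw [RCLike.re_eq_complex_re, hw_re z hz.1]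
      exact mul_pos (mul_pos (by linarith [hz.2.1]) (by linarith [hz.2.2])) (hφpos z hz.1).1)
    (fun z hz => by
      rw [RCLike.re_eq_complex_re, hw_re z hz.1]
      exact mul_nonneg (mul_nonneg (by linarith [hz.2.1]) (by linarith [hz.2.2]))
        (hφpos z hz.1).1.le)
  obtain ⟨g, hg, hgh⟩ := hw.polynomial_mul s (p ^ 2 + C η)
  have hval : ∀ z ∈ spectralSet, cosTransform g z =
      (((p.eval (Complex.cos (s * z)).re) ^ 2 + η) * (w z).re : ℝ) := fun z hz => by
    have h1 : Complex.cos (s * z) = ((Complex.cos (s * z)).re : ℂ) :=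
      Complex.ext rfl (im_cos_mul_of_mem_spectralSet hz s)
    have h2 : w z = ((w z).re : ℂ) := by rw [hw_re z hz, ← hw_eq z hz]
    have h3 : aeval (Complex.cos (s * z)) p = ((p.eval (Complex.cos (s * z)).re : ℝ) : ℂ) := by
      rw [h1, Complex.ofReal_re]
      exact aeval_algebraMap_apply_eq_algebraMap_eval _ _
    rw [hgh]
    beta_reduce
    rw [map_add, map_pow, aeval_C, h3, h2]
    push_cast
    rfl
  have hInt : ∫ z, cosTransform g z ∂ν =
      ((∫ z, ((p.eval (Complex.cos (s * z)).re) ^ 2 + η) * (w z).re ∂ν : ℝ) : ℂ) := by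
    rw [← integral_complex_ofReal]
    exact integral_congr_ae (hν.mono hval)
  refine ⟨g, hg.contDiff, hg.hasCompactSupport, hg.even, fun z hz hzJ => ?_, ?_⟩
  · change (cosTransform g z).re < 0 ∧ (cosTransform g z).im = 0
    rw [hval z hz, Complex.ofReal_re, hw_re z hz]
    refine ⟨mul_neg_of_pos_of_neg (by positivity)
      (mul_neg_of_neg_of_pos ?_ (hφpos z hz).1), Complex.ofReal_im _⟩
    rcases le_or_gt (z ^ 2 + 1/4).re a' with h | h
    · exact mul_neg_of_neg_of_pos (by linarith) (by linarith)
    · have := not_lt.1 fun h' => hzJ ⟨h, h'⟩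
      exact mul_neg_of_pos_of_neg (by linarith) (by linarith)
  · change 0 < (∫ z, cosTransform g z ∂ν).re ∧ (∫ z, cosTransform g z ∂ν).im = 0
    rw [hInt, Complex.ofReal_re]
    exact ⟨hpos, Complex.ofReal_im _⟩
end
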